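/- (Continuity of the generalized solitons) For every real p > 1 and every A ≥ 2 there exists a constant C(A) > 0 such that the following holds: if d₁, d₂ ∈ (−1,1) and ν₁ > −1+|d₁|, ν₂ > −1+|d₂| satisfy ν₁/(1−|d₁|) ∈ [−1+1/A, A] and ν₂/(1−|d₂|) ∈ [−1+1/A, A], then ‖κ*(d₁,ν₁,·) − κ*(d₂,ν₂,·)‖_H ≤ C(A) ( |ν₁/(1−|d₁|) − ν₂/(1−|d₂|)| + |arctanh d₁ − arctanh d₂| ). -/

import Mathlib

/-!
Write `μ = ν / (1 - |d|)`, `m = 1 - |d|`, `Y = 1 + d y`, `X = 1 + d y + ν = Y + μ m`,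
`α = 1 / (p - 1)`, and let `Δ` be the right-hand distance between the two parameters.

The proof works with logarithms. The functions `log (1 ± d)`, hence also `log (1 - d ^ 2)`,
`log m` and `log Y` (as `Y` is a convex combination of `1 + d` and `1 - d`), are globally Lipschitz
in `arctanh d`. Since `m ≤ Y`, the ratio `m / Y` is bounded and Lipschitz as well, and
`X = Y (1 + μ m / Y)` with `1 + μ m / Y ≥ 1 / A` shows that `log X` is Lipschitz in the parameters,
uniformly in `y` (`log_X`). Since `κ₁`, `∂_y κ₁`, `κ₂` are `(1 - d ^ 2) ^ α / X ^ c` times a bounded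
Lipschitz factor (`1`, `d` and `ν / X`), and since a positive quantity with Lipschitz logarithm
satisfies `|x₁ - x₂| ≤ L Δ (x₁ + x₂)`, the three differences are at most `C Δ` times the sum of the
two weights. This global bound makes any path or case distinction on the size of `Δ` unnecessary.

It remains to bound the weights. As `X ≥ Y / A` and `(1 - d ^ 2) (1 - y ^ 2) ≤ Y ^ 2`, the terms of
`κ₁` and `κ₂` are bounded pointwise (`weight_bdd`). The derivative term is at most a multiple of
`(1 - d ^ 2) ^ (2 α) / Y ^ (2 α + 1)` (`weight_deriv`), whose integral over `(-1, 1)` is bounded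
uniformly in `d` (`integral_E`).
-/


open MeasureTheory

noncomputable def kappa0 (p : ℝ) : ℝ := (2 * (p + 1) / (p - 1) ^ 2) ^ ((1 : ℝ) / (p - 1))

noncomputable def rho (p y : ℝ) : ℝ := (1 - y ^ 2) ^ ((2 : ℝ) / (p - 1))

noncomputable def kappa1star (p d ν y : ℝ) : ℝ :=
  kappa0 p * (1 - d ^ 2) ^ ((1 : ℝ) / (p - 1)) / (1 + d * y + ν) ^ ((2 : ℝ) / (p - 1))

noncomputable def kappa2star (p d ν y : ℝ) : ℝ :=
  -(2 * kappa0 p * ν / (p - 1)) * (1 - d ^ 2) ^ ((1 : ℝ) / (p - 1))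
    / (1 + d * y + ν) ^ ((p + 1) / (p - 1))

/-- The inverse hyperbolic tangent on `(-1,1)`. -/
noncomputable def arctanh (x : ℝ) : ℝ := (1 / 2) * Real.log ((1 + x) / (1 - x))


/-! ### Lipschitz bounds for logarithms -/

/-- A positive quantity with Lipschitz logarithm is Lipschitz relative to its own size. -/
lemma abs_sub_le_of_log {x y L : ℝ} (hx : 0 < x) (hy : 0 < y)
    (h : |Real.log x - Real.log y| ≤ L) : |x - y| ≤ L * (x + y) := by
  have h1 := Real.log_le_sub_one_of_pos (div_pos hy hx)
  have h2 := Real.log_le_sub_one_of_pos (div_pos hx hy)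
  rw [Real.log_div hy.ne' hx.ne'] at h1
  rw [Real.log_div hx.ne' hy.ne'] at h2
  have e1 : y / x * x = y := div_mul_cancel₀ _ hx.ne'
  have e2 : x / y * y = x := div_mul_cancel₀ _ hy.ne'
  obtain ⟨h3, h4⟩ := abs_le.1 h
  have h5 : (Real.log y - Real.log x) * x ≤ y - x := by nlinarith
  have h6 : (Real.log x - Real.log y) * y ≤ x - y := by nlinarith
  have hL : 0 ≤ L := (abs_nonneg _).trans h
  rw [abs_le]
  constructor <;> nlinarith [mul_nonneg hL hx.le, mul_nonneg hL hy.le]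

lemma log_sub_le_iff {x y T : ℝ} (hx : 0 < x) (hy : 0 < y) :
    Real.log x - Real.log y ≤ T ↔ x ≤ Real.exp T * y := by
  rw [← Real.log_div hx.ne' hy.ne', Real.log_le_iff_le_exp (div_pos hx hy), div_le_iff₀ hy]

/-- `log (1 + d)` and `-log (1 - d)` both increase with `d`, so their variations add up. -/
lemma log_arctanh {d₁ d₂ : ℝ} (h₁ : d₁ ∈ Set.Ioo (-1 : ℝ) 1) (h₂ : d₂ ∈ Set.Ioo (-1 : ℝ) 1) :
    |Real.log (1 + d₁) - Real.log (1 + d₂)| + |Real.log (1 - d₁) - Real.log (1 - d₂)|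
      = 2 * |arctanh d₁ - arctanh d₂| := by
  have key : ∀ {a b : ℝ}, a ∈ Set.Ioo (-1 : ℝ) 1 → b ∈ Set.Ioo (-1 : ℝ) 1 → a ≤ b →
      |Real.log (1 + a) - Real.log (1 + b)| + |Real.log (1 - a) - Real.log (1 - b)|
      = 2 * |arctanh a - arctanh b| := by
    rintro a b ⟨ha, ha'⟩ ⟨hb, hb'⟩ hab
    have e1 : Real.log (1 + a) ≤ Real.log (1 + b) := Real.log_le_log (by linarith) (by linarith)
    have e2 : Real.log (1 - b) ≤ Real.log (1 - a) := Real.log_le_log (by linarith) (by linarith)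
    unfold arctanh
    rw [Real.log_div (by linarith) (by linarith), Real.log_div (by linarith) (by linarith),
      abs_of_nonpos (by linarith), abs_of_nonneg (by linarith), abs_of_nonpos (by linarith)]
    ring
  rcases le_total d₁ d₂ with h | h
  · exact key h₁ h₂ h
  · have := key h₂ h₁ h
    rwa [abs_sub_comm (arctanh d₁), abs_sub_comm (Real.log (1 + d₁)),
      abs_sub_comm (Real.log (1 - d₁))]

section
variable {d₁ d₂ y : ℝ}

lemma abs_log_add (h₁ : d₁ ∈ Set.Ioo (-1 : ℝ) 1) (h₂ : d₂ ∈ Set.Ioo (-1 : ℝ) 1) :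
    |Real.log (1 + d₁) - Real.log (1 + d₂)| ≤ 2 * |arctanh d₁ - arctanh d₂| := by
  have := log_arctanh h₁ h₂
  linarith [abs_nonneg (Real.log (1 - d₁) - Real.log (1 - d₂))]

lemma abs_log_sub (h₁ : d₁ ∈ Set.Ioo (-1 : ℝ) 1) (h₂ : d₂ ∈ Set.Ioo (-1 : ℝ) 1) :
    |Real.log (1 - d₁) - Real.log (1 - d₂)| ≤ 2 * |arctanh d₁ - arctanh d₂| := by
  have := log_arctanh h₁ h₂
  linarith [abs_nonneg (Real.log (1 + d₁) - Real.log (1 + d₂))]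

lemma abs_log_sq (h₁ : d₁ ∈ Set.Ioo (-1 : ℝ) 1) (h₂ : d₂ ∈ Set.Ioo (-1 : ℝ) 1) :
    |Real.log (1 - d₁ ^ 2) - Real.log (1 - d₂ ^ 2)| ≤ 2 * |arctanh d₁ - arctanh d₂| := by
  have h := log_arctanh h₁ h₂
  obtain ⟨a1, b1⟩ := h₁
  obtain ⟨a2, b2⟩ := h₂
  have e : ∀ d : ℝ, -1 < d → d < 1 →
      Real.log (1 - d ^ 2) = Real.log (1 + d) + Real.log (1 - d) := by
    intro d h h'
    rw [← Real.log_mul (by linarith) (by linarith)]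
    congr 1; ring
  rw [e _ a1 b1, e _ a2 b2]
  calc _ = |(Real.log (1 + d₁) - Real.log (1 + d₂))
        + (Real.log (1 - d₁) - Real.log (1 - d₂))| := by congr 1; ring
    _ ≤ _ := (abs_add_le _ _).trans h.le

lemma abs_sub_le_arctanh (h₁ : d₁ ∈ Set.Ioo (-1 : ℝ) 1) (h₂ : d₂ ∈ Set.Ioo (-1 : ℝ) 1) :
    |d₁ - d₂| ≤ 8 * |arctanh d₁ - arctanh d₂| := by
  have h := abs_sub_le_of_log (by linarith [h₁.1]) (by linarith [h₂.1]) (abs_log_add h₁ h₂)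
  rw [show 1 + d₁ - (1 + d₂) = d₁ - d₂ by ring] at h
  nlinarith [abs_nonneg (arctanh d₁ - arctanh d₂), h₁.2, h₂.2]

lemma one_sub_abs_pos (h₁ : d₁ ∈ Set.Ioo (-1 : ℝ) 1) : 0 < 1 - |d₁| := by
  have := abs_lt.2 h₁
  linarith

lemma one_sub_sq_pos (h₁ : d₁ ∈ Set.Ioo (-1 : ℝ) 1) : 0 < 1 - d₁ ^ 2 := by
  nlinarith [h₁.1, h₁.2]

lemma m_le_Y (hy : y ∈ Set.Ioo (-1 : ℝ) 1) : 1 - |d₁| ≤ 1 + d₁ * y := by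
  have h := neg_abs_le (d₁ * y)
  rw [abs_mul] at h
  nlinarith [abs_lt.2 hy, abs_nonneg d₁, abs_nonneg y]

lemma Y_pos (h₁ : d₁ ∈ Set.Ioo (-1 : ℝ) 1) (hy : y ∈ Set.Ioo (-1 : ℝ) 1) : 0 < 1 + d₁ * y :=
  (one_sub_abs_pos h₁).trans_le (m_le_Y hy)

lemma abs_log_m (h₁ : d₁ ∈ Set.Ioo (-1 : ℝ) 1) (h₂ : d₂ ∈ Set.Ioo (-1 : ℝ) 1) :
    |Real.log (1 - |d₁|) - Real.log (1 - |d₂|)| ≤ 2 * |arctanh d₁ - arctanh d₂| := by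
  have key : ∀ {a b : ℝ}, a ∈ Set.Ioo (-1 : ℝ) 1 → b ∈ Set.Ioo (-1 : ℝ) 1 →
      Real.log (1 - |a|) - Real.log (1 - |b|) ≤ 2 * |arctanh a - arctanh b| := by
    intro a b ha hb
    have hm := one_sub_abs_pos ha
    have l1 : Real.log (1 - |a|) ≤ Real.log (1 + a) :=
      Real.log_le_log hm (by linarith [neg_abs_le a])
    have l2 : Real.log (1 - |a|) ≤ Real.log (1 - a) :=
      Real.log_le_log hm (by linarith [le_abs_self a])
    have k1 := (abs_le.1 (abs_log_add ha hb)).2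
    have k2 := (abs_le.1 (abs_log_sub ha hb)).2
    rcases abs_cases b with ⟨e, _⟩ | ⟨e, _⟩
    · rw [e]; linarith
    · rw [e, sub_neg_eq_add]; linarith
  have h := key h₂ h₁
  rw [abs_sub_comm (arctanh d₂)] at h
  exact abs_le.2 ⟨by linarith, key h₁ h₂⟩

/-- `1 + d y` is the convex combination of `1 + d` and `1 - d` with weights `(1 ± y) / 2`. -/
lemma abs_log_Y (h₁ : d₁ ∈ Set.Ioo (-1 : ℝ) 1) (h₂ : d₂ ∈ Set.Ioo (-1 : ℝ) 1)
    (hy : y ∈ Set.Ioo (-1 : ℝ) 1) :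
    |Real.log (1 + d₁ * y) - Real.log (1 + d₂ * y)| ≤ 2 * |arctanh d₁ - arctanh d₂| := by
  have key : ∀ {a b : ℝ}, a ∈ Set.Ioo (-1 : ℝ) 1 → b ∈ Set.Ioo (-1 : ℝ) 1 →
      Real.log (1 + a * y) - Real.log (1 + b * y) ≤ 2 * |arctanh a - arctanh b| := by
    intro a b ha hb
    have k1 := (abs_le.1 (abs_log_add ha hb)).2
    have k2 := (abs_le.1 (abs_log_sub ha hb)).2
    rw [log_sub_le_iff (by linarith [ha.1]) (by linarith [hb.1])] at k1
    rw [log_sub_le_iff (by linarith [ha.2]) (by linarith [hb.2])] at k2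
    rw [log_sub_le_iff (Y_pos ha hy) (Y_pos hb hy)]
    nlinarith [mul_le_mul_of_nonneg_right k1 (show 0 ≤ 1 + y by linarith [hy.1]),
      mul_le_mul_of_nonneg_right k2 (show 0 ≤ 1 - y by linarith [hy.2])]
  have h := key h₂ h₁
  rw [abs_sub_comm (arctanh d₂)] at h
  exact abs_le.2 ⟨by linarith, key h₁ h₂⟩

/-- `log x` is `A`-Lipschitz on `[1 / A, ∞)`. -/
lemma abs_log_le {A x z : ℝ} (hA : 0 < A) (hx : 1 / A ≤ x) (hz : 1 / A ≤ z) :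
    |Real.log x - Real.log z| ≤ A * |x - z| := by
  have key : ∀ {x z : ℝ}, 1 / A ≤ x → 1 / A ≤ z → Real.log x - Real.log z ≤ A * |x - z| := by
    intro x z hx hz
    have hA' : 0 < 1 / A := by positivity
    have hx0 : 0 < x := hA'.trans_le hx
    have hz0 : 0 < z := hA'.trans_le hz
    have h := Real.log_le_sub_one_of_pos (div_pos hx0 hz0)
    rw [Real.log_div hx0.ne' hz0.ne'] at h
    have h1 : 1 / z ≤ A := by rw [div_le_comm₀ hz0 hA]; exact hz
    calc _ ≤ x / z - 1 := h
      _ = (1 / z) * (x - z) := by field_simp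
      _ ≤ (1 / z) * |x - z| := by gcongr; exact le_abs_self _
      _ ≤ _ := by gcongr
  have h := key hz hx
  rw [abs_sub_comm z] at h
  exact abs_le.2 ⟨by linarith, key hx hz⟩

end

/-! ### The denominator `X = 1 + d y + ν` -/

/-- The lower bound `X ≥ Y / A`, from `m ≤ Y`. -/
lemma X_ge {A d μ y : ℝ} (hA : 2 ≤ A) (hd : d ∈ Set.Ioo (-1 : ℝ) 1) (hy : y ∈ Set.Ioo (-1 : ℝ) 1)
    (hμ : μ ∈ Set.Icc (-1 + 1 / A) A) :
    (1 + d * y) / A ≤ 1 + d * y + μ * (1 - |d|) := by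
  have h1 := one_sub_abs_pos hd
  have h2 := m_le_Y (d₁ := d) hy
  have h3 : 1 / A ≤ 1 := by rw [div_le_one (by linarith)]; linarith
  rw [div_eq_mul_one_div]
  nlinarith [mul_le_mul_of_nonneg_right hμ.1 h1.le,
    mul_le_mul_of_nonneg_right h2 (show 0 ≤ 1 - 1 / A by linarith)]

section
variable {A d₁ d₂ μ₁ μ₂ y : ℝ}

/-- `log X` is Lipschitz in the parameters, uniformly in `y`: factor `X = Y (1 + μ r)` with
`r = m / Y ∈ (0, 1]`. -/
lemma log_X (hA : 2 ≤ A) (h₁ : d₁ ∈ Set.Ioo (-1 : ℝ) 1) (h₂ : d₂ ∈ Set.Ioo (-1 : ℝ) 1)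
    (hy : y ∈ Set.Ioo (-1 : ℝ) 1)
    (hμ₁ : μ₁ ∈ Set.Icc (-1 + 1 / A) A) (hμ₂ : μ₂ ∈ Set.Icc (-1 + 1 / A) A) :
    |Real.log (1 + d₁ * y + μ₁ * (1 - |d₁|)) - Real.log (1 + d₂ * y + μ₂ * (1 - |d₂|))|
      ≤ (2 + 8 * A ^ 2) * (|μ₁ - μ₂| + |arctanh d₁ - arctanh d₂|) := by
  have hA0 : 0 < A := by linarith
  have hY₁ := Y_pos h₁ hy
  have hY₂ := Y_pos h₂ hy
  have hm₁ := one_sub_abs_pos h₁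
  have hm₂ := one_sub_abs_pos h₂
  have fact : ∀ {d μ : ℝ}, d ∈ Set.Ioo (-1 : ℝ) 1 → μ ∈ Set.Icc (-1 + 1 / A) A →
      1 / A ≤ 1 + μ * ((1 - |d|) / (1 + d * y)) ∧
      Real.log (1 + d * y + μ * (1 - |d|)) = Real.log (1 + d * y)
        + Real.log (1 + μ * ((1 - |d|) / (1 + d * y))) := by
    intro d μ hd hμ
    have hY := Y_pos hd hy
    have e : 1 + d * y + μ * (1 - |d|) = (1 + d * y) * (1 + μ * ((1 - |d|) / (1 + d * y))) := by
      field_simp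
    have h : 1 / A ≤ 1 + μ * ((1 - |d|) / (1 + d * y)) := by
      have := X_ge hA hd hy hμ
      rw [e, div_eq_mul_one_div] at this
      exact le_of_mul_le_mul_left this hY
    refine ⟨h, ?_⟩
    rw [e, Real.log_mul hY.ne']
    have : 0 < 1 / A := by positivity
    linarith
  obtain ⟨f1, e1⟩ := fact h₁ hμ₁
  obtain ⟨f2, e2⟩ := fact h₂ hμ₂
  set r₁ := (1 - |d₁|) / (1 + d₁ * y) with hr₁
  set r₂ := (1 - |d₂|) / (1 + d₂ * y) with hr₂
  have r1pos : 0 < r₁ := div_pos hm₁ hY₁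
  have r2pos : 0 < r₂ := div_pos hm₂ hY₂
  have r1le : r₁ ≤ 1 := by rw [hr₁, div_le_one hY₁]; exact m_le_Y hy
  have r2le : r₂ ≤ 1 := by rw [hr₂, div_le_one hY₂]; exact m_le_Y hy
  set δ := |arctanh d₁ - arctanh d₂| with hδ
  have hδ0 : 0 ≤ δ := abs_nonneg _
  have hLY := abs_le.1 (abs_log_Y h₁ h₂ hy)
  have hLm := abs_le.1 (abs_log_m h₁ h₂)
  have hr : |r₁ - r₂| ≤ 4 * δ * (r₁ + r₂) := by
    apply abs_sub_le_of_log r1pos r2pos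
    rw [hr₁, hr₂, Real.log_div hm₁.ne' hY₁.ne', Real.log_div hm₂.ne' hY₂.ne', abs_le]
    constructor <;> linarith
  have hr' : |r₁ - r₂| ≤ 8 * δ := by nlinarith
  have hμa : |μ₁| ≤ A := by
    have : 0 < 1 / A := by positivity
    exact abs_le.2 ⟨by linarith [hμ₁.1], hμ₁.2⟩
  have hμr : |(1 + μ₁ * r₁) - (1 + μ₂ * r₂)| ≤ A * (8 * δ) + |μ₁ - μ₂| := by
    calc _ = |μ₁ * (r₁ - r₂) + (μ₁ - μ₂) * r₂| := by congr 1; ring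
      _ ≤ |μ₁| * |r₁ - r₂| + |μ₁ - μ₂| * r₂ := by
        refine (abs_add_le _ _).trans ?_
        rw [abs_mul, abs_mul, abs_of_pos r2pos]
      _ ≤ A * (8 * δ) + |μ₁ - μ₂| * 1 := by gcongr
      _ = _ := by ring
  have hl := (abs_log_le hA0 f1 f2).trans (mul_le_mul_of_nonneg_left hμr hA0.le)
  have hl' := abs_le.1 hl
  rw [e1, e2]
  have h0 := abs_nonneg (μ₁ - μ₂)
  have hAA : A * |μ₁ - μ₂| ≤ (2 + 8 * A ^ 2) * |μ₁ - μ₂| :=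
    mul_le_mul_of_nonneg_right (by nlinarith) h0
  rw [abs_le]
  constructor <;> nlinarith

end

/-! ### Bounds for the weights -/

lemma weight_bdd {α A d y X : ℝ} (hα : 0 < α) (hA : 2 ≤ A) (hd : d ∈ Set.Ioo (-1 : ℝ) 1)
    (hy : y ∈ Set.Ioo (-1 : ℝ) 1) (hX : (1 + d * y) / A ≤ X) :
    ((1 - d ^ 2) ^ α / X ^ (2 * α)) ^ 2 * (1 - y ^ 2) ^ (2 * α) ≤ (A ^ 2) ^ (2 * α) := by
  have hA0 : 0 < A := by linarith
  have hY := Y_pos hd hy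
  have hX0 : 0 < X := (div_pos hY hA0).trans_le hX
  have h1 := one_sub_sq_pos hd
  have h2 := one_sub_sq_pos hy
  have e : ((1 - d ^ 2) ^ α / X ^ (2 * α)) ^ 2 * (1 - y ^ 2) ^ (2 * α)
      = ((1 - d ^ 2) * (1 - y ^ 2) / X ^ 2) ^ (2 * α) := by
    rw [Real.div_rpow (by positivity) (by positivity), Real.mul_rpow h1.le h2.le, div_pow,
      ← Real.rpow_mul_natCast h1.le, ← Real.rpow_natCast X 2, ← Real.rpow_mul hX0.le,
      ← Real.rpow_mul_natCast hX0.le]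
    push_cast
    rw [mul_comm α 2, mul_comm (2 * α) 2]
    ring
  rw [e]
  apply Real.rpow_le_rpow (by positivity) _ (by positivity)
  rw [div_le_iff₀ (by positivity)]
  rw [div_le_iff₀ hA0] at hX
  calc (1 - d ^ 2) * (1 - y ^ 2) ≤ (1 + d * y) ^ 2 := by nlinarith [sq_nonneg (d + y)]
    _ ≤ (X * A) ^ 2 := by gcongr
    _ = _ := by ring

lemma one_sub_sq_le_Y {d y : ℝ} (hd : d ∈ Set.Ioo (-1 : ℝ) 1) (hy : y ∈ Set.Ioo (-1 : ℝ) 1) :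
    1 - y ^ 2 ≤ 2 * (1 + d * y) := by
  have h := m_le_Y (d₁ := y) hd
  have h' := abs_lt.2 hy
  rw [mul_comm] at h
  nlinarith [sq_abs y, abs_nonneg y]

lemma weight_deriv {α A d y X : ℝ} (hα : 0 < α) (hA : 2 ≤ A) (hd : d ∈ Set.Ioo (-1 : ℝ) 1)
    (hy : y ∈ Set.Ioo (-1 : ℝ) 1) (hX : (1 + d * y) / A ≤ X) :
    ((1 - d ^ 2) ^ α / X ^ (2 * α + 1)) ^ 2 * (1 - y ^ 2) * (1 - y ^ 2) ^ (2 * α)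
      ≤ (2 * A ^ 2) ^ (2 * α + 1) * ((1 - d ^ 2) ^ (2 * α) * (1 + d * y) ^ (-(2 * α) - 1)) := by
  have hA0 : 0 < A := by linarith
  have hY := Y_pos hd hy
  have hX0 : 0 < X := (div_pos hY hA0).trans_le hX
  have h1 := one_sub_sq_pos hd
  have h2 := one_sub_sq_pos hy
  have e : ((1 - d ^ 2) ^ α / X ^ (2 * α + 1)) ^ 2 * (1 - y ^ 2) * (1 - y ^ 2) ^ (2 * α)
      = (1 - d ^ 2) ^ (2 * α) * ((1 - y ^ 2) / X ^ 2) ^ (2 * α + 1) := by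
    rw [Real.div_rpow (by positivity) (by positivity), Real.rpow_add_one h2.ne', div_pow,
      ← Real.rpow_mul_natCast h1.le, ← Real.rpow_natCast X 2, ← Real.rpow_mul hX0.le,
      ← Real.rpow_mul_natCast hX0.le]
    push_cast
    rw [mul_comm α 2, mul_comm (2 * α + 1) 2]
    ring
  have e2 : (2 * A ^ 2) ^ (2 * α + 1) * ((1 - d ^ 2) ^ (2 * α) * (1 + d * y) ^ (-(2 * α) - 1))
      = (1 - d ^ 2) ^ (2 * α) * (2 * A ^ 2 / (1 + d * y)) ^ (2 * α + 1) := by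
    rw [Real.div_rpow (by positivity) hY.le, show -(2 * α) - 1 = -(2 * α + 1) by ring,
      Real.rpow_neg hY.le]
    ring
  rw [e, e2]
  gcongr ?_ * ?_
  apply Real.rpow_le_rpow (by positivity) _ (by positivity)
  rw [div_le_div_iff₀ (by positivity) hY]
  rw [div_le_iff₀ hA0] at hX
  calc (1 - y ^ 2) * (1 + d * y) ≤ 2 * (1 + d * y) * (1 + d * y) := by
        gcongr; exact one_sub_sq_le_Y hd hy
    _ = 2 * (1 + d * y) ^ 2 := by ring
    _ ≤ 2 * (X * A) ^ 2 := by gcongr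
    _ = _ := by ring

lemma m_le_Y_Icc {d y : ℝ} (hy : y ∈ Set.Icc (-1 : ℝ) 1) :
    1 - |d| ≤ 1 + d * y := by
  have h := neg_abs_le (d * y)
  rw [abs_mul] at h
  nlinarith [abs_le.2 hy, abs_nonneg d, abs_nonneg y]

lemma continuousOn_E {d β : ℝ} (hd : d ∈ Set.Ioo (-1 : ℝ) 1) :
    ContinuousOn (fun y : ℝ => (1 - d ^ 2) ^ β * (1 + d * y) ^ (-β - 1)) (Set.Icc (-1) 1) := by
  apply ContinuousOn.mul continuousOn_const
  apply ContinuousOn.rpow_const (by fun_prop)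
  intro y hy
  exact Or.inl ((one_sub_abs_pos hd).trans_le (m_le_Y_Icc hy)).ne'

/-- The weight `E` integrated here is split as `|d| E + (1 - |d|) E`: the first part has an explicit primitive with no
division by `d`, and the second one is bounded pointwise. -/
lemma integral_E {d β : ℝ} (hβ : 0 < β) (hd : d ∈ Set.Ioo (-1 : ℝ) 1) :
    ∫ y in (-1 : ℝ)..1, (1 - d ^ 2) ^ β * (1 + d * y) ^ (-β - 1) ≤ 2 ^ β / β + 2 * 2 ^ β := by
  have hm := one_sub_abs_pos hd
  have hsq := one_sub_sq_pos hd
  have hsqm : 1 - d ^ 2 ≤ 2 * (1 - |d|) := by nlinarith [sq_abs d, abs_nonneg d]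
  have hpos : ∀ y ∈ Set.Icc (-1 : ℝ) 1, 0 < 1 + d * y := fun y hy => hm.trans_le (m_le_Y_Icc hy)
  have hu : Set.uIcc (-1 : ℝ) 1 = Set.Icc (-1) 1 := Set.uIcc_of_le (by norm_num)
  have hc0 : ContinuousOn (fun y : ℝ => (1 + d * y) ^ (-β - 1)) (Set.Icc (-1) 1) :=
    ContinuousOn.rpow_const (by fun_prop) fun y hy => Or.inl (hpos y hy).ne'
  have hi0 : IntervalIntegrable (fun y : ℝ => (1 + d * y) ^ (-β - 1)) volume (-1) 1 :=
    ContinuousOn.intervalIntegrable (by rwa [hu])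
  have ftc : ∫ y in (-1 : ℝ)..1, d * (1 + d * y) ^ (-β - 1)
      = (-(1 / β) * (1 + d * 1) ^ (-β)) - (-(1 / β) * (1 + d * (-1)) ^ (-β)) := by
    apply intervalIntegral.integral_eq_sub_of_hasDerivAt
      (f := fun y => -(1 / β) * (1 + d * y) ^ (-β))
    · intro y hy
      rw [hu] at hy
      have hlin : HasDerivAt (fun y : ℝ => 1 + d * y) d y := by
        simpa using ((hasDerivAt_id y).const_mul d).const_add 1
      have := (hlin.rpow_const (p := -β) (Or.inl (hpos y hy).ne')).const_mul (-(1 / β))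
      refine this.congr_deriv ?_
      field_simp
    · exact hi0.const_mul d
  have hb : ∀ x : ℝ, 1 - |d| ≤ x → 0 ≤ (1 / β) * x ^ (-β) ∧
      (1 / β) * x ^ (-β) ≤ (1 / β) * (1 - |d|) ^ (-β) := by
    intro x hx
    have hx0 := hm.trans_le hx
    refine ⟨by positivity, ?_⟩
    gcongr ?_ * ?_
    exact Real.rpow_le_rpow_of_nonpos hm hx (by linarith)
  have b1 := hb (1 + d * 1) (by linarith [neg_abs_le d])
  have b2 := hb (1 + d * (-1)) (by linarith [le_abs_self d])
  set J := ∫ y in (-1 : ℝ)..1, (1 + d * y) ^ (-β - 1) with hJ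
  have hJ0 : 0 ≤ J := by
    apply intervalIntegral.integral_nonneg (by norm_num)
    intro y hy
    exact Real.rpow_nonneg (hpos y hy).le _
  have hdJ : |d| * J ≤ (1 / β) * (1 - |d|) ^ (-β) := by
    rw [← abs_of_nonneg hJ0, ← abs_mul, hJ, ← intervalIntegral.integral_const_mul, ftc, abs_le]
    constructor <;> linarith [b1.1, b1.2, b2.1, b2.2]
  have hmJ : (1 - |d|) * J ≤ 2 * (1 - |d|) ^ (-β) := by
    rw [hJ, ← intervalIntegral.integral_const_mul]
    calc _ ≤ ∫ y in (-1 : ℝ)..1, (1 - |d|) ^ (-β) := by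
          apply intervalIntegral.integral_mono_on (by norm_num) (hi0.const_mul _) (by simp)
          intro y hy
          have hY := hpos y hy
          calc (1 - |d|) * (1 + d * y) ^ (-β - 1)
              ≤ (1 + d * y) * (1 + d * y) ^ (-β - 1) := by
                gcongr; exact m_le_Y_Icc hy
            _ = (1 + d * y) ^ (-β) := by
                rw [Real.rpow_sub_one hY.ne']; field_simp
            _ ≤ _ := Real.rpow_le_rpow_of_nonpos hm (m_le_Y_Icc hy) (by linarith)
      _ = _ := by simp; norm_num
  have hJb : J ≤ (1 / β + 2) * (1 - |d|) ^ (-β) := by linarith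
  rw [intervalIntegral.integral_const_mul]
  calc (1 - d ^ 2) ^ β * J ≤ (2 * (1 - |d|)) ^ β * ((1 / β + 2) * (1 - |d|) ^ (-β)) := by
        gcongr
    _ = 2 ^ β / β + 2 * 2 ^ β := by
        rw [Real.mul_rpow (by norm_num) hm.le, Real.rpow_neg hm.le]
        have : (1 - |d|) ^ β ≠ 0 := by positivity
        field_simp

/-! ### Pointwise estimate of the differences -/

/-- Multiplying by a bounded Lipschitz factor preserves a relative Lipschitz bound. -/
lemma prod_lip {u₁ u₂ v₁ v₂ U M L Δ : ℝ} (hv₁ : 0 ≤ v₁) (hM : 0 ≤ M) (hΔ : 0 ≤ Δ)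
    (hv₂ : 0 ≤ v₂) (hu : |u₁| ≤ U) (hu' : |u₁ - u₂| ≤ M * Δ)
    (hv : |v₁ - v₂| ≤ L * Δ * (v₁ + v₂)) :
    |u₁ * v₁ - u₂ * v₂| ≤ (U * L + M) * Δ * (v₁ + v₂) := by
  have hU : 0 ≤ U := (abs_nonneg _).trans hu
  calc _ = |u₁ * (v₁ - v₂) + (u₁ - u₂) * v₂| := by congr 1; ring
    _ ≤ |u₁| * |v₁ - v₂| + |u₁ - u₂| * v₂ := by
      refine (abs_add_le _ _).trans ?_
      rw [abs_mul, abs_mul, abs_of_nonneg hv₂]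
    _ ≤ U * (L * Δ * (v₁ + v₂)) + (M * Δ) * (v₁ + v₂) := by
      gcongr
      linarith
    _ = _ := by ring

lemma weight_lip {α c K Δ x₁ x₂ X₁ X₂ : ℝ} (hα : 0 < α) (hc : 0 < c) (hx₁ : 0 < x₁) (hx₂ : 0 < x₂)
    (hX₁ : 0 < X₁) (hX₂ : 0 < X₂) (hx : |Real.log x₁ - Real.log x₂| ≤ 2 * Δ)
    (hX : |Real.log X₁ - Real.log X₂| ≤ K * Δ) :
    |x₁ ^ α / X₁ ^ c - x₂ ^ α / X₂ ^ c| ≤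
      (2 * α + c * K) * Δ * (x₁ ^ α / X₁ ^ c + x₂ ^ α / X₂ ^ c) := by
  apply abs_sub_le_of_log (by positivity) (by positivity)
  rw [Real.log_div (by positivity) (by positivity), Real.log_div (by positivity) (by positivity),
    Real.log_rpow hx₁, Real.log_rpow hx₂, Real.log_rpow hX₁, Real.log_rpow hX₂]
  obtain ⟨a1, a2⟩ := abs_le.1 hx
  obtain ⟨b1, b2⟩ := abs_le.1 hX
  rw [abs_le]
  constructor <;> nlinarith

lemma sq_le_of_lip {t L Δ v₁ v₂ : ℝ} (h : |t| ≤ L * Δ * (v₁ + v₂)) :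
    t ^ 2 ≤ 2 * L ^ 2 * Δ ^ 2 * (v₁ ^ 2 + v₂ ^ 2) := by
  calc t ^ 2 = |t| ^ 2 := (sq_abs t).symm
    _ ≤ (L * Δ * (v₁ + v₂)) ^ 2 := by gcongr
    _ = (L * Δ) ^ 2 * (v₁ + v₂) ^ 2 := by ring
    _ ≤ (L * Δ) ^ 2 * (2 * (v₁ ^ 2 + v₂ ^ 2)) := by
      gcongr; nlinarith [sq_nonneg (v₁ - v₂)]
    _ = _ := by ring

lemma hasDerivAt_kappa1 {p d ν y : ℝ} (hX : 0 < 1 + d * y + ν) :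
    HasDerivAt (kappa1star p d ν)
      (-(kappa0 p * (2 * (1 / (p - 1)))) * (d * ((1 - d ^ 2) ^ (1 / (p - 1))
        / (1 + d * y + ν) ^ (2 * (1 / (p - 1)) + 1)))) y := by
  have hlin : HasDerivAt (fun y : ℝ => 1 + d * y + ν) d y := by
    simpa using (((hasDerivAt_id y).const_mul d).const_add 1).add_const ν
  have h : HasDerivAt (kappa1star p d ν) _ y := (hasDerivAt_const y (kappa0 p * (1 - d ^ 2) ^ ((1 : ℝ) / (p - 1)))).div
    (hlin.rpow_const (p := 2 / (p - 1)) (Or.inl hX.ne')) (by positivity)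
  refine h.congr_deriv ?_
  have e : (2 : ℝ) * (1 / (p - 1)) = 2 / (p - 1) := by ring
  rw [e, Real.rpow_add_one hX.ne', Real.rpow_sub_one hX.ne']
  have : (1 + d * y + ν) ^ (2 / (p - 1)) ≠ 0 := by positivity
  generalize (1 + d * y + ν) ^ (2 / (p - 1)) = P at *
  generalize (1 - d ^ 2) ^ (1 / (p - 1)) = Q at *
  generalize 2 / (p - 1) = R at *
  field_simp
  ring

lemma kappa1_eq (p d ν y : ℝ) : kappa1star p d ν y =
    kappa0 p * ((1 - d ^ 2) ^ (1 / (p - 1)) / (1 + d * y + ν) ^ (2 * (1 / (p - 1)))) := by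
  unfold kappa1star
  rw [show (2 : ℝ) * (1 / (p - 1)) = 2 / (p - 1) by ring]
  ring

lemma kappa2_eq {p d ν y : ℝ} (hp : 1 < p) (hX : 0 < 1 + d * y + ν) : kappa2star p d ν y =
    -(kappa0 p * (2 * (1 / (p - 1)))) * ((ν / (1 + d * y + ν)) *
      ((1 - d ^ 2) ^ (1 / (p - 1)) / (1 + d * y + ν) ^ (2 * (1 / (p - 1))))) := by
  have hp' : p - 1 ≠ 0 := by linarith
  unfold kappa2star
  rw [show (p + 1) / (p - 1) = 2 * (1 / (p - 1)) + 1 by field_simp; ring,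
    Real.rpow_add_one hX.ne']
  have : (1 + d * y + ν) ^ (2 * (1 / (p - 1))) ≠ 0 := by positivity
  generalize (1 + d * y + ν) ^ (2 * (1 / (p - 1))) = P at *
  generalize (1 - d ^ 2) ^ (1 / (p - 1)) = Q at *
  field_simp

/-- The integrand is at most `Δ ^ 2 (C₀ + C₁ (E₁ + E₂))`, with `E₁`, `E₂` the two weights whose
integrals are controlled by `integral_E`. -/
lemma pointwise (p : ℝ) (hp : 1 < p) (A : ℝ) (hA : 2 ≤ A) : ∃ C₀ C₁ : ℝ, 0 ≤ C₀ ∧ 0 ≤ C₁ ∧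
    ∀ d₁ d₂ μ₁ μ₂ y : ℝ, d₁ ∈ Set.Ioo (-1 : ℝ) 1 → d₂ ∈ Set.Ioo (-1 : ℝ) 1 →
      μ₁ ∈ Set.Icc (-1 + 1 / A) A → μ₂ ∈ Set.Icc (-1 + 1 / A) A → y ∈ Set.Ioo (-1 : ℝ) 1 →
      ((kappa1star p d₁ (μ₁ * (1 - |d₁|)) y - kappa1star p d₂ (μ₂ * (1 - |d₂|)) y) ^ 2
        + (deriv (fun y' => kappa1star p d₁ (μ₁ * (1 - |d₁|)) y'
            - kappa1star p d₂ (μ₂ * (1 - |d₂|)) y') y) ^ 2 * (1 - y ^ 2)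
        + (kappa2star p d₁ (μ₁ * (1 - |d₁|)) y
            - kappa2star p d₂ (μ₂ * (1 - |d₂|)) y) ^ 2) * rho p y
      ≤ (|μ₁ - μ₂| + |arctanh d₁ - arctanh d₂|) ^ 2 * (C₀ + C₁ *
        ((1 - d₁ ^ 2) ^ (2 * (1 / (p - 1))) * (1 + d₁ * y) ^ (-(2 * (1 / (p - 1))) - 1)
        + (1 - d₂ ^ 2) ^ (2 * (1 / (p - 1))) * (1 + d₂ * y) ^ (-(2 * (1 / (p - 1))) - 1))) := by
  set α := 1 / (p - 1) with hα
  have hα0 : 0 < α := by rw [hα]; exact div_pos one_pos (by linarith)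
  have hA0 : 0 < A := by linarith
  set K := 2 + 8 * A ^ 2 with hK
  have hK0 : 0 < K := by positivity
  -- Relative Lipschitz constants of `κ₁`, of `∂_y κ₁` and of `κ₂`.
  set LG := 2 * α + (2 * α) * K with hLG
  set LD := 1 * (2 * α + (2 * α + 1) * K) + 8 with hLD
  set M := A * (2 * A * (2 + K)) + A with hM
  set Lk := A * A * LG + M with hLk
  set B := (A ^ 2) ^ (2 * α) with hB
  set B' := (2 * A ^ 2) ^ (2 * α + 1) with hB'
  set k := kappa0 p * (2 * α) with hk
  have hB0 : 0 ≤ B := by positivity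
  have hB0' : 0 ≤ B' := by positivity
  refine ⟨4 * (kappa0 p ^ 2 * LG ^ 2 + k ^ 2 * Lk ^ 2) * B, 2 * k ^ 2 * LD ^ 2 * B',
    by positivity, by positivity, ?_⟩
  intro d₁ d₂ μ₁ μ₂ y h₁ h₂ hμ₁ hμ₂ hy
  set Δ := |μ₁ - μ₂| + |arctanh d₁ - arctanh d₂| with hΔ
  have hm0 := abs_nonneg (μ₁ - μ₂)
  have hξ0 := abs_nonneg (arctanh d₁ - arctanh d₂)
  have hΔ0 : 0 ≤ Δ := by positivity
  have hξΔ : |arctanh d₁ - arctanh d₂| ≤ Δ := by linarith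
  have hμΔ : |μ₁ - μ₂| ≤ Δ := by linarith
  have hm₁ := one_sub_abs_pos h₁
  have hm₂ := one_sub_abs_pos h₂
  have hY₁ := Y_pos h₁ hy
  have hY₂ := Y_pos h₂ hy
  have hs₁ := one_sub_sq_pos h₁
  have hs₂ := one_sub_sq_pos h₂
  have hsy := one_sub_sq_pos hy
  have hXg₁ := X_ge hA h₁ hy hμ₁
  have hXg₂ := X_ge hA h₂ hy hμ₂
  have hlogX := log_X hA h₁ h₂ hy hμ₁ hμ₂
  have hX₁ := (div_pos hY₁ hA0).trans_le hXg₁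
  have hX₂ := (div_pos hY₂ hA0).trans_le hXg₂
  have hder : deriv (fun y' => kappa1star p d₁ (μ₁ * (1 - |d₁|)) y'
      - kappa1star p d₂ (μ₂ * (1 - |d₂|)) y') y = _ :=
    ((hasDerivAt_kappa1 (p := p) hX₁).sub (hasDerivAt_kappa1 (p := p) hX₂)).deriv
  rw [hder, kappa1_eq, kappa1_eq, kappa2_eq hp hX₁, kappa2_eq hp hX₂]
  rw [← hα, ← hk]
  have hrho : rho p y = (1 - y ^ 2) ^ (2 * α) := by
    unfold rho; rw [hα]; congr 1; ring
  rw [hrho]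
  have hbG₁ := weight_bdd hα0 hA h₁ hy hXg₁
  have hbG₂ := weight_bdd hα0 hA h₂ hy hXg₂
  have hbD₁ := weight_deriv hα0 hA h₁ hy hXg₁
  have hbD₂ := weight_deriv hα0 hA h₂ hy hXg₂
  rw [← hB] at hbG₁ hbG₂
  rw [← hB'] at hbD₁ hbD₂
  have hsq := (abs_log_sq h₁ h₂).trans (mul_le_mul_of_nonneg_left hξΔ (by norm_num))
  have hG := weight_lip hα0 (show 0 < 2 * α by positivity) hs₁ hs₂ hX₁ hX₂ hsq hlogX
  have hD := weight_lip hα0 (show 0 < 2 * α + 1 by positivity) hs₁ hs₂ hX₁ hX₂ hsq hlogX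
  -- `w = m / X` is bounded by `A` and has a Lipschitz logarithm.
  have hw : ∀ {m X Y : ℝ}, 0 < X → m ≤ Y → Y / A ≤ X → m / X ≤ A := by
    intro m X Y hX h h'
    rw [div_le_iff₀ hX]
    rw [div_le_iff₀ hA0] at h'
    linarith
  have hw₁ := hw hX₁ (m_le_Y (d₁ := d₁) hy) hXg₁
  have hw₂ := hw hX₂ (m_le_Y (d₁ := d₂) hy) hXg₂
  have hlm := (abs_log_m h₁ h₂).trans (mul_le_mul_of_nonneg_left hξΔ (by norm_num))
  rw [mul_div_assoc, mul_div_assoc]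
  generalize 1 + d₁ * y + μ₁ * (1 - |d₁|) = X₁ at *
  generalize 1 + d₂ * y + μ₂ * (1 - |d₂|) = X₂ at *
  have hwp₁ : 0 < (1 - |d₁|) / X₁ := div_pos hm₁ hX₁
  have hwp₂ : 0 < (1 - |d₂|) / X₂ := div_pos hm₂ hX₂
  have hwl : |(1 - |d₁|) / X₁ - (1 - |d₂|) / X₂| ≤ 2 * A * (2 + K) * Δ := by
    have h : |Real.log ((1 - |d₁|) / X₁) - Real.log ((1 - |d₂|) / X₂)| ≤ (2 + K) * Δ := by
      rw [Real.log_div hm₁.ne' hX₁.ne', Real.log_div hm₂.ne' hX₂.ne']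
      obtain ⟨a1, a2⟩ := abs_le.1 hlm
      obtain ⟨b1, b2⟩ := abs_le.1 hlogX
      rw [abs_le]
      constructor <;> linarith
    refine (abs_sub_le_of_log hwp₁ hwp₂ h).trans ?_
    calc (2 + K) * Δ * ((1 - |d₁|) / X₁ + (1 - |d₂|) / X₂) ≤ (2 + K) * Δ * (A + A) := by gcongr
      _ = _ := by ring
  generalize (1 - |d₁|) / X₁ = w₁ at *
  generalize (1 - |d₂|) / X₂ = w₂ at *
  have hμa : |μ₁| ≤ A := by
    have : 0 < 1 / A := by positivity
    exact abs_le.2 ⟨by linarith [hμ₁.1], hμ₁.2⟩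
  have hkl : |μ₁ * w₁ - μ₂ * w₂| ≤ M * Δ := by
    calc _ = |μ₁ * (w₁ - w₂) + (μ₁ - μ₂) * w₂| := by congr 1; ring
      _ ≤ |μ₁| * |w₁ - w₂| + |μ₁ - μ₂| * w₂ := by
        refine (abs_add_le _ _).trans ?_
        rw [abs_mul, abs_mul, abs_of_pos hwp₂]
      _ ≤ A * (2 * A * (2 + K) * Δ) + Δ * A := by gcongr
      _ = M * Δ := by rw [hM]; ring
  have hkb : |μ₁ * w₁| ≤ A * A := by
    rw [abs_mul, abs_of_pos hwp₁]; gcongr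
  have hd1 : |d₁| ≤ 1 := by linarith
  have hdd : |d₁ - d₂| ≤ 8 * Δ := (abs_sub_le_arctanh h₁ h₂).trans (by linarith)
  have hG₁0 : 0 ≤ (1 - d₁ ^ 2) ^ α / X₁ ^ (2 * α) := by positivity
  have hG₂0 : 0 ≤ (1 - d₂ ^ 2) ^ α / X₂ ^ (2 * α) := by positivity
  have hD₁0 : 0 ≤ (1 - d₁ ^ 2) ^ α / X₁ ^ (2 * α + 1) := by positivity
  have hD₂0 : 0 ≤ (1 - d₂ ^ 2) ^ α / X₂ ^ (2 * α + 1) := by positivity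
  have hR0 : 0 ≤ (1 - y ^ 2) ^ (2 * α) := by positivity
  generalize (1 - d₁ ^ 2) ^ α / X₁ ^ (2 * α) = G₁ at *
  generalize (1 - d₂ ^ 2) ^ α / X₂ ^ (2 * α) = G₂ at *
  generalize (1 - d₁ ^ 2) ^ α / X₁ ^ (2 * α + 1) = D₁ at *
  generalize (1 - d₂ ^ 2) ^ α / X₂ ^ (2 * α + 1) = D₂ at *
  generalize (1 - y ^ 2) ^ (2 * α) = R at *
  generalize (1 - d₁ ^ 2) ^ (2 * α) * (1 + d₁ * y) ^ (-(2 * α) - 1) = E₁ at *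
  generalize (1 - d₂ ^ 2) ^ (2 * α) * (1 + d₂ * y) ^ (-(2 * α) - 1) = E₂ at *
  have s1 := sq_le_of_lip hG
  have s2 := sq_le_of_lip (prod_lip hD₁0 (by norm_num) hΔ0 hD₂0 hd1 hdd hD)
  have hM0 : 0 ≤ M := by positivity
  have s3 := sq_le_of_lip (prod_lip hG₁0 hM0 hΔ0 hG₂0 hkb hkl hG)
  rw [← hLG] at s1 s3
  rw [← hLD] at s2
  rw [← hLk] at s3
  have sy := hsy.le
  calc _ = (kappa0 p ^ 2 * (G₁ - G₂) ^ 2 + k ^ 2 * (d₁ * D₁ - d₂ * D₂) ^ 2 * (1 - y ^ 2)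
        + k ^ 2 * (μ₁ * w₁ * G₁ - μ₂ * w₂ * G₂) ^ 2) * R := by ring
    _ ≤ (kappa0 p ^ 2 * (2 * LG ^ 2 * Δ ^ 2 * (G₁ ^ 2 + G₂ ^ 2))
        + k ^ 2 * (2 * LD ^ 2 * Δ ^ 2 * (D₁ ^ 2 + D₂ ^ 2)) * (1 - y ^ 2)
        + k ^ 2 * (2 * Lk ^ 2 * Δ ^ 2 * (G₁ ^ 2 + G₂ ^ 2))) * R := by gcongr
    _ = Δ ^ 2 * (2 * (kappa0 p ^ 2 * LG ^ 2 + k ^ 2 * Lk ^ 2) * (G₁ ^ 2 * R + G₂ ^ 2 * R)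
        + 2 * k ^ 2 * LD ^ 2 * (D₁ ^ 2 * (1 - y ^ 2) * R + D₂ ^ 2 * (1 - y ^ 2) * R)) := by ring
    _ ≤ Δ ^ 2 * (2 * (kappa0 p ^ 2 * LG ^ 2 + k ^ 2 * Lk ^ 2) * (B + B)
        + 2 * k ^ 2 * LD ^ 2 * (B' * E₁ + B' * E₂)) := by gcongr
    _ = _ := by ring

theorem stmt6 (p : ℝ) (hp : 1 < p) :
    ∀ A : ℝ, 2 ≤ A → ∃ C : ℝ, 0 < C ∧
      ∀ d₁ d₂ ν₁ ν₂ : ℝ,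
        d₁ ∈ Set.Ioo (-1 : ℝ) 1 → d₂ ∈ Set.Ioo (-1 : ℝ) 1 →
        -1 + |d₁| < ν₁ → -1 + |d₂| < ν₂ →
        ν₁ / (1 - |d₁|) ∈ Set.Icc (-1 + 1 / A) A →
        ν₂ / (1 - |d₂|) ∈ Set.Icc (-1 + 1 / A) A →
        (∫⁻ y in Set.Ioo (-1 : ℝ) 1,
            ENNReal.ofReal (((kappa1star p d₁ ν₁ y - kappa1star p d₂ ν₂ y) ^ 2
              + (deriv (fun y' => kappa1star p d₁ ν₁ y' - kappa1star p d₂ ν₂ y') y) ^ 2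
                  * (1 - y ^ 2)
              + (kappa2star p d₁ ν₁ y - kappa2star p d₂ ν₂ y) ^ 2) * rho p y)) ^ ((1 : ℝ) / 2)
        ≤ ENNReal.ofReal (C * (|ν₁ / (1 - |d₁|) - ν₂ / (1 - |d₂|)|
            + |arctanh d₁ - arctanh d₂|)) := by
  intro A hA
  obtain ⟨C₀, C₁, hC₀, hC₁, hpt⟩ := pointwise p hp A hA
  set β := 2 * (1 / (p - 1)) with hβ
  have hβ0 : 0 < β := by
    have : 0 < p - 1 := by linarith
    positivity
  set I := 2 ^ β / β + 2 * 2 ^ β with hI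
  have hI0 : 0 ≤ I := by positivity
  set S := 2 * C₀ + C₁ * (I + I) with hS
  have hS0 : 0 ≤ S := by positivity
  refine ⟨Real.sqrt S + 1, by positivity, ?_⟩
  intro d₁ d₂ ν₁ ν₂ h₁ h₂ _ _ hμ₁ hμ₂
  have hm₁ := one_sub_abs_pos h₁
  have hm₂ := one_sub_abs_pos h₂
  set μ₁ := ν₁ / (1 - |d₁|) with hdμ₁
  set μ₂ := ν₂ / (1 - |d₂|) with hdμ₂
  have e₁ : ν₁ = μ₁ * (1 - |d₁|) := by rw [hdμ₁]; field_simp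
  have e₂ : ν₂ = μ₂ * (1 - |d₂|) := by rw [hdμ₂]; field_simp
  clear_value μ₁ μ₂
  subst e₁ e₂
  set Δ := |μ₁ - μ₂| + |arctanh d₁ - arctanh d₂| with hΔ
  have hΔ0 : 0 ≤ Δ := by positivity
  set F : ℝ → ℝ := fun y => Δ ^ 2 * (C₀ + C₁ *
        ((1 - d₁ ^ 2) ^ β * (1 + d₁ * y) ^ (-β - 1)
        + (1 - d₂ ^ 2) ^ β * (1 + d₂ * y) ^ (-β - 1))) with hF
  have hu : Set.uIcc (-1 : ℝ) 1 = Set.Icc (-1) 1 := Set.uIcc_of_le (by norm_num)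
  have hi₁ : IntervalIntegrable (fun y : ℝ => (1 - d₁ ^ 2) ^ β * (1 + d₁ * y) ^ (-β - 1))
      volume (-1) 1 := ContinuousOn.intervalIntegrable (by rw [hu]; exact continuousOn_E h₁)
  have hi₂ : IntervalIntegrable (fun y : ℝ => (1 - d₂ ^ 2) ^ β * (1 + d₂ * y) ^ (-β - 1))
      volume (-1) 1 := ContinuousOn.intervalIntegrable (by rw [hu]; exact continuousOn_E h₂)
  have hiF : IntervalIntegrable F volume (-1) 1 :=
    (intervalIntegrable_const.add ((hi₁.add hi₂).const_mul C₁)).const_mul (Δ ^ 2)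
  have hF0 : ∀ y ∈ Set.Ioo (-1 : ℝ) 1, 0 ≤ F y := by
    intro y hy
    have := Y_pos h₁ hy
    have := Y_pos h₂ hy
    have := one_sub_sq_pos h₁
    have := one_sub_sq_pos h₂
    simp only [hF]
    positivity
  have hint : ∫ y in (-1 : ℝ)..1, F y ≤ Δ ^ 2 * S := by
    simp only [hF]
    rw [intervalIntegral.integral_const_mul,
      intervalIntegral.integral_add intervalIntegrable_const ((hi₁.add hi₂).const_mul C₁),
      intervalIntegral.integral_const_mul, intervalIntegral.integral_add hi₁ hi₂,
      intervalIntegral.integral_const]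
    have i1 := integral_E hβ0 h₁
    have i2 := integral_E hβ0 h₂
    have e : (1 - (-1) : ℝ) • C₀ = 2 * C₀ := by simp; norm_num
    rw [e, hS]
    gcongr
  have hlin : (∫⁻ y in Set.Ioo (-1 : ℝ) 1, ENNReal.ofReal
      (((kappa1star p d₁ (μ₁ * (1 - |d₁|)) y - kappa1star p d₂ (μ₂ * (1 - |d₂|)) y) ^ 2
        + (deriv (fun y' => kappa1star p d₁ (μ₁ * (1 - |d₁|)) y'
            - kappa1star p d₂ (μ₂ * (1 - |d₂|)) y') y) ^ 2 * (1 - y ^ 2)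
        + (kappa2star p d₁ (μ₁ * (1 - |d₁|)) y
            - kappa2star p d₂ (μ₂ * (1 - |d₂|)) y) ^ 2) * rho p y))
      ≤ ENNReal.ofReal (Δ ^ 2 * S) := by
    calc _ ≤ ∫⁻ y in Set.Ioo (-1 : ℝ) 1, ENNReal.ofReal (F y) := by
          apply setLIntegral_mono' measurableSet_Ioo
          intro y hy
          exact ENNReal.ofReal_le_ofReal (hpt d₁ d₂ μ₁ μ₂ y h₁ h₂ hμ₁ hμ₂ hy)
      _ = ENNReal.ofReal (∫ y in Set.Ioo (-1 : ℝ) 1, F y) := by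
          rw [ofReal_integral_eq_lintegral_ofReal]
          · rwa [← IntegrableOn, ← intervalIntegrable_iff_integrableOn_Ioo_of_le (by norm_num)]
          · exact (ae_restrict_iff' measurableSet_Ioo).2 (Filter.Eventually.of_forall hF0)
      _ ≤ _ := by
          apply ENNReal.ofReal_le_ofReal
          rwa [← integral_Ioc_eq_integral_Ioo,
            ← intervalIntegral.integral_of_le (by norm_num)]
  calc _ ≤ ENNReal.ofReal (Δ ^ 2 * S) ^ ((1 : ℝ) / 2) :=
        ENNReal.rpow_le_rpow hlin (by norm_num)
    _ = ENNReal.ofReal (Real.sqrt (Δ ^ 2 * S)) := by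
        rw [ENNReal.ofReal_rpow_of_nonneg (by positivity) (by norm_num), Real.sqrt_eq_rpow]
    _ ≤ _ := by
        apply ENNReal.ofReal_le_ofReal
        rw [Real.sqrt_mul (sq_nonneg _), Real.sqrt_sq hΔ0]
        nlinarith [Real.sqrt_nonneg S]
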